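/- For every m ≥ 2t, the Berlekamp–Massey algorithm satisfies f^(m) = f^e and φ^(m) = φ^e; that is, the algorithm computes the error locator and error evaluator polynomials after 2t iterations. -/

import Mathlib

open Polynomial
open scoped Classical

noncomputable section

variable {F : Type*} [Field F]

/-- The coefficient of `x^a` in the Laurent expansion of the rational function `h`
in `1/x` (i.e. the expansion at infinity): substituting `x = 1/t`, the rational
function `h(1/t)` equals `t^(deg denom - deg num) * reverse(num)(t)/reverse(denom)(t)`,
and we take the coefficient of `t^(-a)` in its Laurent expansion at `t = 0`. -/
def coeffAtInf (h : RatFunc F) (a : ℤ) : F :=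
  let v : RatFunc F :=
    (RatFunc.X : RatFunc F) ^ ((h.denom.natDegree : ℤ) - (h.num.natDegree : ℤ)) *
      (algebraMap (Polynomial F) (RatFunc F) h.num.reverse /
        algebraMap (Polynomial F) (RatFunc F) h.denom.reverse)
  ((v : LaurentSeries F)).coeff (-a)

variable (F) in
/-- The error locator polynomial `f^e`. -/
def errLoc {n : ℕ} (α : Fin n → F) (e : Fin n → F) : Polynomial F :=
  ∏ j ∈ Finset.univ.filter (fun j => e j ≠ 0), (X - C (α j))

variable (F) in
/-- The error evaluator polynomial `φ^e`. -/
def errEval {n : ℕ} (α : Fin n → F) (e : Fin n → F) : Polynomial F :=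
  ∑ j ∈ Finset.univ.filter (fun j => e j ≠ 0),
    C (e j) * ∏ k ∈ (Finset.univ.filter (fun k => e k ≠ 0)).erase j, (X - C (α k))

variable (F) in
/-- The syndrome `S = φ^e/f^e = ∑_j e_j/(x - α_j)` as a rational function. -/
def synd {n : ℕ} (α : Fin n → F) (e : Fin n → F) : RatFunc F :=
  algebraMap (Polynomial F) (RatFunc F) (errEval F α e) /
    algebraMap (Polynomial F) (RatFunc F) (errLoc F α e)

variable (F) in
/-- One step of the Berlekamp--Massey algorithm: the state is the quadruple
`(f^(m), φ^(m), g^(m), ψ^(m))`. -/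
def BMstep (S : RatFunc F) (m : ℕ)
    (st : Polynomial F × Polynomial F × Polynomial F × Polynomial F) :
    Polynomial F × Polynomial F × Polynomial F × Polynomial F :=
  let f := st.1
  let φ := st.2.1
  let g := st.2.2.1
  let ψ := st.2.2.2
  let d : ℕ := f.natDegree
  -- μ is the coefficient of x^(d-m-1) in the Laurent expansion of f^(m)·S in 1/x
  let μ : F := coeffAtInf (algebraMap (Polynomial F) (RatFunc F) f * S) ((d : ℤ) - m - 1)
  let p : ℤ := 2 * d - m - 1
  if μ = 0 ∨ 0 ≤ p then
    (f - C μ * X ^ p.toNat * g, φ - C μ * X ^ p.toNat * ψ, g, ψ)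
  else
    (X ^ (-p).toNat * f - C μ * g, X ^ (-p).toNat * φ - C μ * ψ, C μ⁻¹ * f, C μ⁻¹ * φ)

variable (F) in
/-- The Berlekamp--Massey data `(f^(m), φ^(m), g^(m), ψ^(m))`, initialized at
`(1, 0, 0, -1)`. -/
def BM (S : RatFunc F) : ℕ → Polynomial F × Polynomial F × Polynomial F × Polynomial F
  | 0 => (1, 0, 0, -1)
  | m + 1 => BMstep F S m (BM S m)

end

/-!
Consider the residuals `r = f S - φ` and `q = g S - ψ` of the two fractions in the state. After
`m` steps `deg r < deg f - m`, while `q` is monic of degree exactly `-deg f`. The discrepancy `μ`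
is the next coefficient of `r`, so subtracting `μ` times a power of `x` times `q` cancels it; when
the exponent would be negative, `r` is shifted up instead, and the old `r / μ` takes over the role
of `q` for the increased degree of `f`.

A nonzero residual becomes a nonzero polynomial when multiplied by the denominator of `S`, so its
degree is at least `-t`, where `t` is the degree of that denominator. For `q` this says
`deg f ≤ t`; for `r` and `m ≥ 2t` it contradicts `deg r < t - 2t`, so `r = 0` and `S = φ / f`.
Since `t ≥ deg f`, this fraction is the reduced one, as is `φ^e / f^e`.
-/

section LaurentExpansionAtInfinity

open LaurentSeries

variable {F : Type*} [Field F]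

lemma algebraMap_laurentSeries_eq_eval₂ (P : F[X]) :
    algebraMap F[X] F⸨X⸩ P = P.eval₂ HahnSeries.C (HahnSeries.single 1 1) := by
  induction P using Polynomial.induction_on' with
  | add P Q hP hQ => rw [map_add, eval₂_add, hP, hQ]
  | monomial n c => rw [eval₂_monomial, ← C_mul_X_pow_eq_monomial]; simp

lemma eval₂_single_neg_one_eq_mul_reverse (P : F[X]) :
    P.eval₂ HahnSeries.C (HahnSeries.single (-1) 1 : F⸨X⸩) =
      HahnSeries.single 1 1 ^ (-(P.natDegree : ℤ)) * algebraMap F[X] F⸨X⸩ P.reverse := by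
  let _ : Invertible (HahnSeries.single (-1) 1 : F⸨X⸩) :=
    ⟨HahnSeries.single 1 1, by simp, by simp⟩
  have hinv : ⅟(HahnSeries.single (-1) 1 : F⸨X⸩) = HahnSeries.single 1 1 := rfl
  rw [← eval₂_reverse_mul_pow, hinv, algebraMap_laurentSeries_eq_eval₂, mul_comm,
    ← RatFunc.single_zpow, HahnSeries.single_pow, one_pow, nsmul_eq_mul, mul_neg_one]

lemma eval₂_single_neg_one_eq_sum (P : F[X]) :
    P.eval₂ HahnSeries.C (HahnSeries.single (-1) 1 : F⸨X⸩) =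
      P.sum fun n c => HahnSeries.single (-(n : ℤ)) c := by
  simp only [eval₂_eq_sum, HahnSeries.single_pow, one_pow, nsmul_eq_mul, mul_neg_one,
    HahnSeries.C_apply, HahnSeries.single_mul_single, zero_add, mul_one]

lemma coeff_eval₂_single_neg_one_of_pos (P : F[X]) {a : ℤ} (ha : 0 < a) :
    (P.eval₂ HahnSeries.C (HahnSeries.single (-1) 1 : F⸨X⸩)).coeff a = 0 := by
  rw [eval₂_single_neg_one_eq_sum, sum_def, HahnSeries.coeff_sum]
  exact Finset.sum_eq_zero fun n _ => HahnSeries.coeff_single_of_ne (by lia)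

lemma coeff_eval₂_single_neg_one (P : F[X]) (n : ℕ) :
    (P.eval₂ HahnSeries.C (HahnSeries.single (-1) 1 : F⸨X⸩)).coeff (-(n : ℤ)) = P.coeff n := by
  rw [eval₂_single_neg_one_eq_sum, sum_def, HahnSeries.coeff_sum]
  simp only [HahnSeries.coeff_single, neg_inj, Nat.cast_inj, Finset.sum_ite_eq, mem_support_iff,
    ite_not, ite_eq_right_iff]
  exact Eq.symm

lemma eval₂_single_neg_one_injective :
    Function.Injective (eval₂RingHom (HahnSeries.C : F →+* F⸨X⸩) (HahnSeries.single (-1) 1)) := by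
  intro P Q hPQ
  ext n
  rw [← coeff_eval₂_single_neg_one, ← coeff_eval₂_single_neg_one]
  exact congr_arg (HahnSeries.coeff · (-(n : ℤ))) hPQ

variable (F) in
/-- The Laurent expansion of a rational function at infinity, as a field homomorphism. The
variable of `F⸨X⸩` stands for `1 / x`, so the coefficient of `x ^ a` has index `-a`. -/
noncomputable def expandAtInf : RatFunc F →+* F⸨X⸩ :=
  RatFunc.liftRingHom (eval₂RingHom HahnSeries.C (HahnSeries.single (-1) 1))
    (nonZeroDivisors_le_comap_nonZeroDivisors_of_injective _ eval₂_single_neg_one_injective)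

lemma expandAtInf_algebraMap (P : F[X]) :
    expandAtInf F (algebraMap F[X] (RatFunc F) P) =
      P.eval₂ HahnSeries.C (HahnSeries.single (-1) 1) := by
  rw [expandAtInf, RatFunc.liftRingHom_algebraMap, coe_eval₂RingHom]

lemma expandAtInf_C (c : F) : expandAtInf F (RatFunc.C c) = HahnSeries.C c := by
  rw [← RatFunc.algebraMap_C, expandAtInf_algebraMap, eval₂_C]

lemma expandAtInf_X_pow (n : ℕ) :
    expandAtInf F (RatFunc.X ^ n) = HahnSeries.single (-(n : ℤ)) 1 := by
  rw [← RatFunc.algebraMap_X, ← map_pow, expandAtInf_algebraMap, eval₂_X_pow,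
    HahnSeries.single_pow, one_pow, nsmul_eq_mul, mul_neg_one]

lemma order_expandAtInf_algebraMap (P : F[X]) :
    (expandAtInf F (algebraMap F[X] (RatFunc F) P)).order = -(P.natDegree : ℤ) := by
  rcases eq_or_ne P 0 with rfl | hP
  · simp
  have hne : expandAtInf F (algebraMap F[X] (RatFunc F) P) ≠ 0 :=
    (_root_.map_ne_zero _).mpr (RatFunc.algebraMap_ne_zero hP)
  rw [expandAtInf_algebraMap] at hne ⊢
  refine le_antisymm (HahnSeries.order_le_of_coeff_ne_zero ?_)
    ((HahnSeries.le_order_iff_forall hne).mpr fun a ha => ?_)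
  · rwa [coeff_eval₂_single_neg_one, coeff_natDegree, leadingCoeff_ne_zero]
  · obtain ⟨n, rfl⟩ : ∃ n : ℕ, a = -n := Int.exists_eq_neg_ofNat (by lia)
    rw [coeff_eval₂_single_neg_one, coeff_eq_zero_of_natDegree_lt (by lia)]

lemma order_expandAtInf (h : RatFunc F) : (expandAtInf F h).order = -h.intDegree := by
  rcases eq_or_ne h 0 with rfl | hh
  · simp
  have hmul : expandAtInf F h * expandAtInf F (algebraMap F[X] (RatFunc F) h.denom) =
      expandAtInf F (algebraMap F[X] (RatFunc F) h.num) := by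
    rw [← map_mul, ← eq_div_iff (RatFunc.algebraMap_ne_zero h.denom_ne_zero)|>.mp
      (RatFunc.num_div_denom h).symm]
  have horder := congr_arg HahnSeries.order hmul
  rw [HahnSeries.order_mul ((_root_.map_ne_zero _).mpr hh)
    ((_root_.map_ne_zero _).mpr (RatFunc.algebraMap_ne_zero h.denom_ne_zero)),
    order_expandAtInf_algebraMap, order_expandAtInf_algebraMap] at horder
  rw [RatFunc.intDegree]
  lia

lemma coeffAtInf_eq_coeff_expandAtInf (h : RatFunc F) (a : ℤ) :
    coeffAtInf h a = (expandAtInf F h).coeff (-a) := by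
  have hX : (HahnSeries.single 1 1 : F⸨X⸩) ≠ 0 := HahnSeries.single_ne_zero one_ne_zero
  conv_rhs => rw [← RatFunc.num_div_denom h]
  rw [coeffAtInf, map_mul, map_zpow₀, RatFunc.coe_X, RatFunc.algebraMap_apply_div, map_div₀,
    expandAtInf_algebraMap, expandAtInf_algebraMap, eval₂_single_neg_one_eq_mul_reverse,
    eval₂_single_neg_one_eq_mul_reverse, mul_div_mul_comm, ← zpow_sub₀ hX, neg_sub_neg]

lemma coeffAtInf_zero (a : ℤ) : coeffAtInf (0 : RatFunc F) a = 0 := by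
  rw [coeffAtInf_eq_coeff_expandAtInf, map_zero, HahnSeries.coeff_zero]

lemma coeffAtInf_one (a : ℤ) : coeffAtInf (1 : RatFunc F) a = if a = 0 then 1 else 0 := by
  rw [coeffAtInf_eq_coeff_expandAtInf, map_one, HahnSeries.coeff_one]
  simp only [neg_eq_zero]

lemma coeffAtInf_sub (h k : RatFunc F) (a : ℤ) :
    coeffAtInf (h - k) a = coeffAtInf h a - coeffAtInf k a := by
  simp only [coeffAtInf_eq_coeff_expandAtInf, map_sub, HahnSeries.coeff_sub]

lemma coeffAtInf_C_mul (c : F) (h : RatFunc F) (a : ℤ) :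
    coeffAtInf (RatFunc.C c * h) a = c * coeffAtInf h a := by
  simp only [coeffAtInf_eq_coeff_expandAtInf, map_mul, expandAtInf_C, HahnSeries.C_mul_eq_smul,
    HahnSeries.coeff_smul, smul_eq_mul]

lemma coeffAtInf_X_pow_mul (n : ℕ) (h : RatFunc F) (a : ℤ) :
    coeffAtInf (RatFunc.X ^ n * h) a = coeffAtInf h (a - n) := by
  rw [coeffAtInf_eq_coeff_expandAtInf, coeffAtInf_eq_coeff_expandAtInf, map_mul,
    expandAtInf_X_pow, HahnSeries.coeff_single_mul, one_mul, sub_neg_eq_add, neg_sub,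
    neg_add_eq_sub]

lemma coeffAtInf_algebraMap_of_neg (P : F[X]) {a : ℤ} (ha : a < 0) :
    coeffAtInf (algebraMap F[X] (RatFunc F) P) a = 0 := by
  rw [coeffAtInf_eq_coeff_expandAtInf, expandAtInf_algebraMap,
    coeff_eval₂_single_neg_one_of_pos P (by lia)]

lemma coeffAtInf_eq_zero_of_intDegree_lt {h : RatFunc F} {a : ℤ} (ha : h.intDegree < a) :
    coeffAtInf h a = 0 := by
  rw [coeffAtInf_eq_coeff_expandAtInf]
  exact HahnSeries.coeff_eq_zero_of_lt_order (by rw [order_expandAtInf]; lia)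

lemma coeffAtInf_intDegree_ne_zero {h : RatFunc F} (hh : h ≠ 0) :
    coeffAtInf h h.intDegree ≠ 0 := by
  rw [coeffAtInf_eq_coeff_expandAtInf, ← order_expandAtInf, Ne, HahnSeries.coeff_order_eq_zero,
    _root_.map_eq_zero]
  exact hh

end LaurentExpansionAtInfinity

section LeadAtInf

variable {F : Type*} [Field F] {h k : RatFunc F} {a : ℤ} {c c' : F}

/-- `HasLeadAtInf h a c` says that `h = c x ^ a + (terms of degree < a)` at infinity. The
coefficient `c` may vanish, in which case `h` has degree less than `a`. -/
def HasLeadAtInf (h : RatFunc F) (a : ℤ) (c : F) : Prop :=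
  coeffAtInf h a = c ∧ ∀ b, a < b → coeffAtInf h b = 0

namespace HasLeadAtInf

lemma one : HasLeadAtInf (1 : RatFunc F) 0 1 :=
  ⟨by rw [coeffAtInf_one, if_pos rfl], fun b hb => by rw [coeffAtInf_one, if_neg hb.ne']⟩

lemma of_forall_le (hh : ∀ b, a ≤ b → coeffAtInf h b = 0) : HasLeadAtInf h a 0 :=
  ⟨hh a le_rfl, fun b hb => hh b hb.le⟩

lemma of_degree_num_lt (hh : h.num.degree < h.denom.degree) : HasLeadAtInf h 0 0 := by
  rcases eq_or_ne h 0 with rfl | h0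
  · exact of_forall_le fun b _ => coeffAtInf_zero b
  · have hdeg := natDegree_lt_natDegree (RatFunc.num_ne_zero h0) hh
    exact of_forall_le fun b hb =>
      coeffAtInf_eq_zero_of_intDegree_lt (by rw [RatFunc.intDegree]; lia)

lemma sub (hh : HasLeadAtInf h a c) (hk : HasLeadAtInf k a c') :
    HasLeadAtInf (h - k) a (c - c') :=
  ⟨by rw [coeffAtInf_sub, hh.1, hk.1],
    fun b hb => by rw [coeffAtInf_sub, hh.2 b hb, hk.2 b hb, sub_zero]⟩

lemma C_mul (hh : HasLeadAtInf h a c) (u : F) : HasLeadAtInf (RatFunc.C u * h) a (u * c) :=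
  ⟨by rw [coeffAtInf_C_mul, hh.1], fun b hb => by rw [coeffAtInf_C_mul, hh.2 b hb, mul_zero]⟩

lemma X_pow_mul (hh : HasLeadAtInf h a c) (n : ℕ) :
    HasLeadAtInf (RatFunc.X ^ n * h) (a + n) c :=
  ⟨by rw [coeffAtInf_X_pow_mul, add_sub_cancel_right, hh.1],
    fun b hb => by rw [coeffAtInf_X_pow_mul, hh.2 _ (by lia)]⟩

lemma pred (hh : HasLeadAtInf h a 0) : HasLeadAtInf h (a - 1) (coeffAtInf h (a - 1)) := by
  refine ⟨rfl, fun b hb => ?_⟩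
  rcases (show a ≤ b by lia).eq_or_lt with rfl | hab
  · exact hh.1
  · exact hh.2 b hab

lemma intDegree_le (hh : HasLeadAtInf h a c) (h0 : h ≠ 0) : h.intDegree ≤ a :=
  not_lt.mp fun hlt => coeffAtInf_intDegree_ne_zero h0 (hh.2 _ hlt)

lemma intDegree_lt (hh : HasLeadAtInf h a 0) (h0 : h ≠ 0) : h.intDegree < a :=
  (hh.intDegree_le h0).lt_of_ne fun heq => coeffAtInf_intDegree_ne_zero h0 (heq ▸ hh.1)

lemma ne_zero (hh : HasLeadAtInf h a c) (hc : c ≠ 0) : h ≠ 0 := by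
  rintro rfl
  exact hc (hh.1.symm.trans (coeffAtInf_zero a))

end HasLeadAtInf

end LeadAtInf

section Fractions

variable {F : Type*} [Field F] {p q : F[X]}

lemma num_eq_of_eq_div_denom {h : RatFunc F} (hq : q ≠ 0) (hdenom : h.denom = q)
    (hh : h = algebraMap F[X] (RatFunc F) p / algebraMap F[X] (RatFunc F) q) : h.num = p := by
  have hcross := (RatFunc.num_mul_eq_mul_denom_iff hq).mpr hh
  rw [hdenom] at hcross
  exact mul_right_cancel₀ hq hcross

lemma denom_div_of_isCoprime (hq : q.Monic) (hpq : IsCoprime q p) :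
    (algebraMap F[X] (RatFunc F) p / algebraMap F[X] (RatFunc F) q).denom = q := by
  refine eq_of_monic_of_associated (RatFunc.monic_denom _) hq
    (associated_of_dvd_dvd (RatFunc.denom_div_dvd p q) (hpq.dvd_of_dvd_mul_left ?_))
  exact ((RatFunc.num_mul_eq_mul_denom_iff hq.ne_zero).mpr rfl) ▸ dvd_mul_left q _

lemma num_div_of_isCoprime (hq : q.Monic) (hpq : IsCoprime q p) :
    (algebraMap F[X] (RatFunc F) p / algebraMap F[X] (RatFunc F) q).num = p :=
  num_eq_of_eq_div_denom hq.ne_zero (denom_div_of_isCoprime hq hpq) rfl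

end Fractions

section Residual

variable {F : Type*} [Field F] (S : RatFunc F)

/-- The residual `f S - φ` of a candidate fraction `φ / f` for `S`: its degree measures how well
the fraction approximates `S` at infinity. -/
noncomputable def approxResidual (f φ : F[X]) : RatFunc F :=
  algebraMap F[X] (RatFunc F) f * S - algebraMap F[X] (RatFunc F) φ

lemma approxResidual_sub (f φ g ψ : F[X]) :
    approxResidual S (f - g) (φ - ψ) = approxResidual S f φ - approxResidual S g ψ := by
  simp only [approxResidual, map_sub]
  ring

lemma approxResidual_mul (P f φ : F[X]) :
    approxResidual S (P * f) (P * φ) = algebraMap F[X] (RatFunc F) P * approxResidual S f φ := by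
  simp only [approxResidual, map_mul]
  ring

lemma approxResidual_C_mul (c : F) (f φ : F[X]) :
    approxResidual S (C c * f) (C c * φ) = RatFunc.C c * approxResidual S f φ := by
  rw [approxResidual_mul, RatFunc.algebraMap_C]

lemma approxResidual_X_pow_mul (n : ℕ) (f φ : F[X]) :
    approxResidual S (X ^ n * f) (X ^ n * φ) = RatFunc.X ^ n * approxResidual S f φ := by
  rw [approxResidual_mul, map_pow, RatFunc.algebraMap_X]

lemma coeffAtInf_approxResidual_of_neg (f φ : F[X]) {a : ℤ} (ha : a < 0) :
    coeffAtInf (approxResidual S f φ) a = coeffAtInf (algebraMap F[X] (RatFunc F) f * S) a := by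
  rw [approxResidual, coeffAtInf_sub, coeffAtInf_algebraMap_of_neg φ ha, sub_zero]

variable {S} {f φ : F[X]}

lemma neg_natDegree_denom_le_intDegree_approxResidual (hr : approxResidual S f φ ≠ 0) :
    -(S.denom.natDegree : ℤ) ≤ (approxResidual S f φ).intDegree := by
  have hdenom := RatFunc.algebraMap_ne_zero S.denom_ne_zero
  have hpoly : approxResidual S f φ * algebraMap F[X] (RatFunc F) S.denom =
      algebraMap F[X] (RatFunc F) (f * S.num - φ * S.denom) := by
    rw [approxResidual, sub_mul, mul_assoc, (eq_div_iff hdenom).mp (RatFunc.num_div_denom S).symm]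
    simp only [map_sub, map_mul]
  have hdeg := congr_arg RatFunc.intDegree hpoly
  rw [RatFunc.intDegree_mul hr hdenom, RatFunc.intDegree_polynomial,
    RatFunc.intDegree_polynomial] at hdeg
  lia

lemma eq_div_of_approxResidual_eq_zero (hf : f ≠ 0) (hr : approxResidual S f φ = 0) :
    S = algebraMap F[X] (RatFunc F) φ / algebraMap F[X] (RatFunc F) f := by
  rw [eq_div_iff (RatFunc.algebraMap_ne_zero hf), mul_comm]
  exact sub_eq_zero.mp hr

end Residual

section Invariant

variable {F : Type*} [Field F] {S : RatFunc F} {m d : ℕ} {f φ g ψ : F[X]}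

/-- The invariant of the Berlekamp--Massey algorithm after `m` steps, when `f` has degree `d`:
`φ / f` matches the expansion of `S` in the degrees `≥ -m`, and `(g, ψ)` has a monic residual
of degree exactly `-d`, ready to cancel the next error term of `(f, φ)`. -/
structure BMInvariant (S : RatFunc F) (m d : ℕ) (st : F[X] × F[X] × F[X] × F[X]) : Prop where
  monic : st.1.IsMonicOfDegree d
  natDegree_le : st.2.2.1.natDegree + d ≤ m
  lead_residual : HasLeadAtInf (approxResidual S st.1 st.2.1) (d - m) 0
  lead_auxiliary : HasLeadAtInf (approxResidual S st.2.2.1 st.2.2.2) (-d) 1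

namespace BMInvariant

lemma zero (hS : S.num.degree < S.denom.degree) : BMInvariant S 0 0 (1, 0, 0, -1) where
  monic := isMonicOfDegree_zero_iff.mpr rfl
  natDegree_le := by simp
  lead_residual := by simpa [approxResidual] using HasLeadAtInf.of_degree_num_lt hS
  lead_auxiliary := by simpa [approxResidual] using HasLeadAtInf.one

lemma lead_residual_succ (hst : BMInvariant S m d (f, φ, g, ψ)) :
    HasLeadAtInf (approxResidual S f φ) (d - m - 1)
      (coeffAtInf (algebraMap F[X] (RatFunc F) f * S) (d - m - 1)) := by
  have hdm := hst.natDegree_le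
  rw [← coeffAtInf_approxResidual_of_neg S f φ (by lia)]
  exact hst.lead_residual.pred

lemma keep (hst : BMInvariant S m d (f, φ, g, ψ))
    (hlead : HasLeadAtInf (approxResidual S f φ) (d - m - 1) 0) :
    BMInvariant S (m + 1) d (f, φ, g, ψ) where
  monic := hst.monic
  natDegree_le := hst.natDegree_le.trans m.le_succ
  lead_residual := by rwa [Nat.cast_succ, ← sub_sub]
  lead_auxiliary := hst.lead_auxiliary

lemma update (hst : BMInvariant S m d (f, φ, g, ψ)) {μ : F}
    (hlead : HasLeadAtInf (approxResidual S f φ) (d - m - 1) μ) {p : ℕ}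
    (hp : (p : ℤ) = 2 * d - m - 1) :
    BMInvariant S (m + 1) d (f - C μ * (X ^ p * g), φ - C μ * (X ^ p * ψ), g, ψ) where
  monic := by
    have hdm := hst.natDegree_le
    refine hst.monic.sub ?_
    calc (C μ * (X ^ p * g)).natDegree ≤ (X ^ p * g).natDegree := natDegree_C_mul_le _ _
      _ ≤ p + g.natDegree := natDegree_mul_le_of_le (natDegree_X_pow_le p) le_rfl
      _ < d := by lia
  natDegree_le := hst.natDegree_le.trans m.le_succ
  lead_residual := by
    have hcancel := (hst.lead_auxiliary.X_pow_mul p).C_mul μ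
    rw [show (-d + p : ℤ) = d - m - 1 by lia, mul_one] at hcancel
    rw [approxResidual_sub, approxResidual_C_mul, approxResidual_X_pow_mul, Nat.cast_succ,
      ← sub_sub, ← sub_self μ]
    exact hlead.sub hcancel
  lead_auxiliary := hst.lead_auxiliary

lemma swap (hst : BMInvariant S m d (f, φ, g, ψ)) {μ : F}
    (hlead : HasLeadAtInf (approxResidual S f φ) (d - m - 1) μ) (hμ : μ ≠ 0) {p : ℕ}
    (hp : p + 2 * d = m + 1) :
    BMInvariant S (m + 1) (p + d)
      (X ^ p * f - C μ * g, X ^ p * φ - C μ * ψ, C μ⁻¹ * f, C μ⁻¹ * φ) where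
  monic := by
    have hdm := hst.natDegree_le
    refine ((isMonicOfDegree_X_pow F p).mul hst.monic).sub ?_
    exact (natDegree_C_mul_le μ g).trans_lt (by lia)
  natDegree_le := by
    have hf := (natDegree_C_mul_le μ⁻¹ f).trans_eq hst.monic.natDegree_eq
    lia
  lead_residual := by
    have hraise := hlead.X_pow_mul p
    rw [show (d - m - 1 + p : ℤ) = -d by lia] at hraise
    have hcancel := hst.lead_auxiliary.C_mul μ
    rw [mul_one] at hcancel
    rw [approxResidual_sub, approxResidual_C_mul, approxResidual_X_pow_mul, ← sub_self μ,
      show ((p + d : ℕ) - (m + 1 : ℕ) : ℤ) = -d by lia]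
    exact hraise.sub hcancel
  lead_auxiliary := by
    have hscale := hlead.C_mul μ⁻¹
    rw [inv_mul_cancel₀ hμ] at hscale
    rwa [approxResidual_C_mul, show (-(p + d : ℕ) : ℤ) = d - m - 1 by lia]

lemma exists_step {st : F[X] × F[X] × F[X] × F[X]} (hst : BMInvariant S m d st) :
    ∃ d', BMInvariant S (m + 1) d' (BMstep F S m st) := by
  obtain ⟨f, φ, g, ψ⟩ := st
  have hlead := hst.lead_residual_succ
  simp only [BMstep, hst.monic.natDegree_eq, mul_assoc]
  set μ := coeffAtInf (algebraMap F[X] (RatFunc F) f * S) (d - m - 1)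
  split_ifs with hcase
  · refine ⟨d, ?_⟩
    rcases eq_or_ne μ 0 with hμ | hμ
    · rw [hμ] at hlead ⊢
      simpa only [map_zero, zero_mul, sub_zero] using hst.keep hlead
    · exact hst.update hlead (Int.toNat_of_nonneg (hcase.resolve_left hμ))
  · exact ⟨_, hst.swap hlead (not_or.mp hcase).1 (by lia)⟩

lemma exists_BM (hS : S.num.degree < S.denom.degree) (m : ℕ) :
    ∃ d, BMInvariant S m d (BM F S m) := by
  induction m with
  | zero => exact ⟨0, zero hS⟩
  | succ m ih =>
    obtain ⟨d, hd⟩ := ih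
    exact hd.exists_step

variable {st : F[X] × F[X] × F[X] × F[X]}

lemma le_natDegree_denom (hst : BMInvariant S m d st) : d ≤ S.denom.natDegree := by
  have hne := hst.lead_auxiliary.ne_zero one_ne_zero
  have hlower := neg_natDegree_denom_le_intDegree_approxResidual hne
  have hupper := hst.lead_auxiliary.intDegree_le hne
  lia

lemma approxResidual_eq_zero (hst : BMInvariant S m d st) (hm : 2 * S.denom.natDegree ≤ m) :
    approxResidual S st.1 st.2.1 = 0 := by
  by_contra hne
  have hlower := neg_natDegree_denom_le_intDegree_approxResidual hne
  have hupper := hst.lead_residual.intDegree_lt hne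
  have hd := hst.le_natDegree_denom
  lia

lemma eq_denom_and_eq_num (hst : BMInvariant S m d st) (hm : 2 * S.denom.natDegree ≤ m) :
    st.1 = S.denom ∧ st.2.1 = S.num := by
  have hS := eq_div_of_approxResidual_eq_zero hst.monic.ne_zero (hst.approxResidual_eq_zero hm)
  have hdvd : S.denom ∣ st.1 := (RatFunc.denom_dvd hst.monic.ne_zero).mpr ⟨st.2.1, hS⟩
  have hdenom : st.1 = S.denom :=
    eq_of_monic_of_dvd_of_natDegree_le S.monic_denom hst.monic.monic hdvd
      (hst.monic.natDegree_eq.trans_le hst.le_natDegree_denom)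
  exact ⟨hdenom, (num_eq_of_eq_div_denom hst.monic.ne_zero hdenom.symm hS).symm⟩

end BMInvariant

end Invariant

section PartialFractions

open Lagrange

variable {F ι : Type*} [Field F] [DecidableEq ι]

/-- The numerator of `∑ i ∈ s, c i / (x - v i)` over the common denominator `nodal s v`. -/
noncomputable def partialFractionNum (s : Finset ι) (v c : ι → F) : F[X] :=
  ∑ i ∈ s, C (c i) * nodal (s.erase i) v

variable {s : Finset ι} {v c : ι → F}

lemma degree_partialFractionNum_lt : (partialFractionNum s v c).degree < (nodal s v).degree := by
  refine (degree_sum_le _ _).trans_lt ((Finset.sup_lt_iff ?_).mpr fun i hi => ?_)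
  · rw [degree_nodal]
    exact WithBot.bot_lt_coe _
  · calc (C (c i) * nodal (s.erase i) v).degree
        ≤ (nodal (s.erase i) v).degree := by
          rw [← smul_eq_C_mul]
          exact degree_smul_le _ _
      _ < (nodal s v).degree := by
        rw [degree_nodal, degree_nodal, Nat.cast_lt]
        exact Finset.card_erase_lt_of_mem hi

lemma eval_partialFractionNum {i : ι} (hi : i ∈ s) :
    (partialFractionNum s v c).eval (v i) = c i * (nodal (s.erase i) v).eval (v i) := by
  rw [partialFractionNum, eval_finsetSum, Finset.sum_eq_single_of_mem i hi, eval_mul, eval_C]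
  intro j _ hji
  rw [eval_mul, eval_nodal_at_node (Finset.mem_erase.mpr ⟨hji.symm, hi⟩), mul_zero]

lemma isCoprime_nodal_partialFractionNum (hv : Set.InjOn v s) (hc : ∀ i ∈ s, c i ≠ 0) :
    IsCoprime (nodal s v) (partialFractionNum s v c) := by
  rw [nodal_eq]
  refine IsCoprime.prod_left fun i hi => (irreducible_X_sub_C (v i)).coprime_iff_not_dvd.mpr ?_
  rw [dvd_iff_isRoot, IsRoot.def, eval_partialFractionNum hi]
  refine mul_ne_zero (hc i hi) (eval_nodal_not_at_node fun j hj hij => ?_)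
  obtain ⟨hji, hj⟩ := Finset.mem_erase.mp hj
  exact hji (hv hj hi hij.symm)

end PartialFractions

section Syndrome

variable {F : Type*} [Field F] {n : ℕ} {α : Fin n → F}

lemma monic_errLoc (α e : Fin n → F) : (errLoc F α e).Monic := Lagrange.nodal_monic

lemma isCoprime_errLoc_errEval (hα : Function.Injective α) (e : Fin n → F) :
    IsCoprime (errLoc F α e) (errEval F α e) :=
  isCoprime_nodal_partialFractionNum hα.injOn fun _ hj => (Finset.mem_filter.mp hj).2

lemma denom_synd (hα : Function.Injective α) (e : Fin n → F) :
    (synd F α e).denom = errLoc F α e :=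
  denom_div_of_isCoprime (monic_errLoc α e) (isCoprime_errLoc_errEval hα e)

lemma num_synd (hα : Function.Injective α) (e : Fin n → F) :
    (synd F α e).num = errEval F α e :=
  num_div_of_isCoprime (monic_errLoc α e) (isCoprime_errLoc_errEval hα e)

lemma degree_num_synd_lt (hα : Function.Injective α) (e : Fin n → F) :
    (synd F α e).num.degree < (synd F α e).denom.degree := by
  rw [num_synd hα, denom_synd hα]
  exact degree_partialFractionNum_lt

lemma natDegree_denom_synd (hα : Function.Injective α) (e : Fin n → F) :
    (synd F α e).denom.natDegree = (Finset.univ.filter fun j => e j ≠ 0).card := by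
  rw [denom_synd hα]
  exact Lagrange.natDegree_nodal

end Syndrome

theorem berlekamp_massey_terminates_general {F : Type*} [Field F] (S : RatFunc F)
    (hS : S.num.degree < S.denom.degree) (m : ℕ) (hm : 2 * S.denom.natDegree ≤ m) :
    (BM F S m).1 = S.denom ∧ (BM F S m).2.1 = S.num := by
  obtain ⟨d, hd⟩ := BMInvariant.exists_BM hS m
  exact hd.eq_denom_and_eq_num hm

open scoped Classical in
/-- For `m ≥ 2t`, the Berlekamp--Massey algorithm has computed the error locator
and error evaluator polynomials: `f^(m) = f^e` and `φ^(m) = φ^e`. -/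
theorem berlekamp_massey_terminates {F : Type*} [Field F] [Fintype F] {n : ℕ}
    (α : Fin n → F) (hα : Function.Injective α) (e : Fin n → F)
    (t : ℕ) (ht : t = (Finset.univ.filter (fun j => e j ≠ 0)).card)
    (S : RatFunc F) (hS : S = synd F α e) (m : ℕ) (hm : 2 * t ≤ m) :
    (BM F S m).1 = errLoc F α e ∧ (BM F S m).2.1 = errEval F α e := by
  subst ht hS
  simpa only [denom_synd hα, num_synd hα] using berlekamp_massey_terminates_general _
    (degree_num_synd_lt hα e) m (by rwa [natDegree_denom_synd hα])
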